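/- Let 1 ≤ a ≤ b with b ≥ 2 and n ≥ 3a+4 (and na even when a = b). If G is an n-vertex graph that is not [a,b]-covered, then ρ(G) ≤ ρ(H_{n,a}), with equality if and only if G ≅ H_{n,a}. -/

import Mathlib

open SimpleGraph Finset
open scoped Classical

lemma adjMatrix_isHermitian {V : Type*} [Fintype V] (G : SimpleGraph V)
    [DecidableRel G.Adj] : (G.adjMatrix ℝ).IsHermitian := by
  ext i j
  simp [Matrix.conjTranspose_apply, SimpleGraph.adjMatrix_apply, SimpleGraph.adj_comm]

/-- The spectral radius of a graph: the largest eigenvalue of its adjacency matrix. -/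
noncomputable def specRad {n : ℕ} (G : SimpleGraph (Fin n)) : ℝ := by
  classical
  exact ⨆ i, (adjMatrix_isHermitian G).eigenvalues i

/-- H_{n,γ}: vertex 0 is joined to the γ-1 vertices 1,…,γ-1; vertices 1,…,n-1 form a
clique.  Thus Hgraph n γ = K_{γ-1} ∨ (K_{n-γ} ∪ K_1). -/
def Hgraph (n γ : ℕ) : SimpleGraph (Fin n) :=
  SimpleGraph.fromRel (fun u v =>
    (0 < u.val ∧ 0 < v.val) ∨ (u.val = 0 ∧ 0 < v.val ∧ v.val < γ))

/-- There is an [a,b]-factor of G (a spanning subgraph F with a ≤ d_F(v) ≤ b for all v)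
containing the edge uv. -/
def HasABFactorThrough {V : Type*} [Fintype V] (G : SimpleGraph V) (a b : ℕ)
    (u v : V) : Prop :=
  ∃ F : SimpleGraph V, F ≤ G ∧ F.Adj u v ∧
    ∀ w : V, a ≤ (F.neighborSet w).ncard ∧ (F.neighborSet w).ncard ≤ b

/-- G is [a,b]-covered: every edge of G lies in some [a,b]-factor. -/
def IsABCovered {V : Type*} [Fintype V] (G : SimpleGraph V) (a b : ℕ) : Prop :=
  ∀ u v : V, G.Adj u v → HasABFactorThrough G a b u v

/-!
If every degree of `G` is at least `a`, we show that `ρ(G) ≥ n - 2` forces `G` to be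
`[a,b]`-covered; as `H_{n,a}` contains a clique on `n - 1` vertices, this gives `ρ(G) < n - 2 ≤
ρ(H_{n,a})` when `G` is not covered. By Hong's bound `ρ² ≤ 2m - n + 1`, the complement of a graph
with `ρ ≥ n - 2` has at most `n - 2` edges. Among the subgraphs through a given edge with maximum
degree at most `a`, take one, `F`, maximizing the degree sum, each vertex weighted by one more than
its number of non-neighbours. Maximality excludes augmenting paths starting at a vertex of degree
less than `a`, and the weights make exchanges along alternating paths place such vertices where `G`
has few non-neighbours. Counting edges then leaves at most one vertex of degree less than `a`, or
two when `a = 1`, each of degree `a - 1`. If `a < b`, adding an edge of `G` at each of them repairs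
`F`; if `a = b`, a single deficient vertex is excluded by parity.

If some vertex has degree less than `a`, then `G` is isomorphic to a subgraph of `H_{n,a}`, and `ρ`
is monotone; a nonnegative eigenvector of `H_{n,a}` is positive on its nontrivial component, so
deleting any edge strictly decreases `ρ`.
-/

open scoped Matrix

section MaxEigenvalue

variable {V : Type*} [Fintype V] {A B : Matrix V V ℝ} {x : V → ℝ}

lemma dotProduct_mulVec_mono (hAB : ∀ i j, A i j ≤ B i j) (hx : 0 ≤ x) :
    x ⬝ᵥ A *ᵥ x ≤ x ⬝ᵥ B *ᵥ x :=
  sum_le_sum fun i _ => mul_le_mul_of_nonneg_left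
    (sum_le_sum fun j _ => mul_le_mul_of_nonneg_right (hAB i j) (hx j)) (hx i)

/-- The largest eigenvalue of a real symmetric matrix; it is `0` for the empty matrix, which has
no eigenvalues. -/
noncomputable def maxEigenvalue (A : Matrix V V ℝ) : ℝ :=
  sSup {μ | Module.End.HasEigenvalue A.mulVecLin μ}

lemma maxEigenvalue_eq_sSup_spectrum [DecidableEq V] (A : Matrix V V ℝ) :
    maxEigenvalue A = sSup (spectrum ℝ A) := by
  simp_rw [maxEigenvalue, ← Matrix.toLin'_apply', Module.End.hasEigenvalue_iff_mem_spectrum,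
    Matrix.spectrum_toLin', Set.ofPred_mem_eq]

lemma maxEigenvalue_mem_spectrum [Nonempty V] (hA : A.IsHermitian) :
    maxEigenvalue A ∈ spectrum ℝ A := by
  rw [maxEigenvalue_eq_sSup_spectrum]
  refine Set.Nonempty.csSup_mem ?_ (Matrix.finite_real_spectrum (A := A))
  rw [hA.spectrum_real_eq_range_eigenvalues]
  exact Set.range_nonempty _

lemma exists_mulVec_eq_maxEigenvalue_smul [Nonempty V] (hA : A.IsHermitian) :
    ∃ x ≠ 0, A *ᵥ x = maxEigenvalue A • x := by
  have h := maxEigenvalue_mem_spectrum hA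
  rw [← Matrix.spectrum_toLin', ← Module.End.hasEigenvalue_iff_mem_spectrum] at h
  obtain ⟨x, hx⟩ := h.exists_hasEigenvector
  exact ⟨x, hx.2, by simpa using hx.apply_eq_smul⟩

lemma posSemidef_maxEigenvalue_sub (hA : A.IsHermitian) :
    (algebraMap ℝ (Matrix V V ℝ) (maxEigenvalue A) - A).PosSemidef := by
  refine Matrix.posSemidef_iff_isHermitian_and_spectrum_nonneg.mpr ⟨?_, ?_⟩
  · rw [Algebra.algebraMap_eq_smul_one]
    exact (Matrix.isHermitian_one.smul (IsSelfAdjoint.all _)).sub hA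
  · rw [← spectrum.singleton_sub_eq]
    rintro _ ⟨_, rfl, μ, hμ, rfl⟩
    rw [maxEigenvalue_eq_sSup_spectrum]
    exact sub_nonneg.mpr (le_csSup (Matrix.finite_real_spectrum (A := A)).bddAbove hμ)

lemma dotProduct_maxEigenvalue_sub_mulVec (A : Matrix V V ℝ) (x : V → ℝ) :
    star x ⬝ᵥ (algebraMap ℝ (Matrix V V ℝ) (maxEigenvalue A) - A) *ᵥ x =
      maxEigenvalue A * (x ⬝ᵥ x) - x ⬝ᵥ A *ᵥ x := by
  simp [Algebra.algebraMap_eq_smul_one, Matrix.sub_mulVec, Matrix.smul_mulVec]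

lemma dotProduct_mulVec_le_maxEigenvalue_mul (hA : A.IsHermitian) (x : V → ℝ) :
    x ⬝ᵥ A *ᵥ x ≤ maxEigenvalue A * (x ⬝ᵥ x) := by
  have h := (posSemidef_maxEigenvalue_sub hA).dotProduct_mulVec_nonneg x
  rwa [dotProduct_maxEigenvalue_sub_mulVec, sub_nonneg] at h

lemma mulVec_eq_maxEigenvalue_smul_of_le (hA : A.IsHermitian)
    (hx : maxEigenvalue A * (x ⬝ᵥ x) ≤ x ⬝ᵥ A *ᵥ x) : A *ᵥ x = maxEigenvalue A • x := by
  have h := (posSemidef_maxEigenvalue_sub hA).dotProduct_mulVec_zero_iff x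
  rw [dotProduct_maxEigenvalue_sub_mulVec, Matrix.sub_mulVec,
    Algebra.algebraMap_eq_smul_one, Matrix.smul_mulVec, Matrix.one_mulVec, sub_eq_zero,
    sub_eq_zero] at h
  exact (h.mp (hx.antisymm (dotProduct_mulVec_le_maxEigenvalue_mul hA x))).symm

lemma exists_nonneg_mulVec_eq_maxEigenvalue_smul [Nonempty V] (hA : A.IsHermitian)
    (hA₀ : ∀ i j, 0 ≤ A i j) : ∃ x, x ≠ 0 ∧ 0 ≤ x ∧ A *ᵥ x = maxEigenvalue A • x := by
  obtain ⟨x, hx₀, hx⟩ := exists_mulVec_eq_maxEigenvalue_smul hA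
  refine ⟨|x|, by simpa using hx₀, abs_nonneg x, mulVec_eq_maxEigenvalue_smul_of_le hA ?_⟩
  calc maxEigenvalue A * (|x| ⬝ᵥ |x|) = x ⬝ᵥ A *ᵥ x := by
        rw [hx, dotProduct_smul, smul_eq_mul]
        simp [dotProduct, abs_mul_abs_self]
    _ ≤ |x| ⬝ᵥ A *ᵥ |x| := by
        simp only [dotProduct, Matrix.mulVec, mul_sum]
        refine sum_le_sum fun i _ => sum_le_sum fun j _ => ?_
        calc x i * (A i j * x j) = A i j * (x i * x j) := by ring
          _ ≤ A i j * |x i * x j| := mul_le_mul_of_nonneg_left (le_abs_self _) (hA₀ i j)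
          _ = |x| i * (A i j * |x| j) := by rw [abs_mul, Pi.abs_apply, Pi.abs_apply]; ring

lemma maxEigenvalue_mono [Nonempty V] (hA : A.IsHermitian) (hB : B.IsHermitian)
    (hA₀ : ∀ i j, 0 ≤ A i j) (hAB : ∀ i j, A i j ≤ B i j) :
    maxEigenvalue A ≤ maxEigenvalue B := by
  obtain ⟨x, hx, hx₀, hAx⟩ := exists_nonneg_mulVec_eq_maxEigenvalue_smul hA hA₀
  refine le_of_mul_le_mul_right ?_ (Matrix.dotProduct_self_star_pos_iff.mpr hx)
  calc maxEigenvalue A * (x ⬝ᵥ star x) = x ⬝ᵥ A *ᵥ x := by simp [hAx]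
    _ ≤ x ⬝ᵥ B *ᵥ x := dotProduct_mulVec_mono hAB hx₀
    _ ≤ maxEigenvalue B * (x ⬝ᵥ star x) := by
        simpa using dotProduct_mulVec_le_maxEigenvalue_mul hB x

lemma exists_nonneg_mulVec_eq_and_eq [Nonempty V] (hA : A.IsHermitian) (hB : B.IsHermitian)
    (hA₀ : ∀ i j, 0 ≤ A i j) (hAB : ∀ i j, A i j ≤ B i j)
    (h : maxEigenvalue A = maxEigenvalue B) :
    ∃ x, x ≠ 0 ∧ 0 ≤ x ∧ A *ᵥ x = maxEigenvalue B • x ∧ B *ᵥ x = maxEigenvalue B • x := by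
  obtain ⟨x, hx, hx₀, hAx⟩ := exists_nonneg_mulVec_eq_maxEigenvalue_smul hA hA₀
  refine ⟨x, hx, hx₀, h ▸ hAx, mulVec_eq_maxEigenvalue_smul_of_le hB ?_⟩
  calc maxEigenvalue B * (x ⬝ᵥ x) = x ⬝ᵥ A *ᵥ x := by simp [hAx, h]
    _ ≤ x ⬝ᵥ B *ᵥ x := dotProduct_mulVec_mono hAB hx₀

end MaxEigenvalue

section AdjMatrix

lemma adjMatrix_apply_nonneg {V : Type*} (G : SimpleGraph V) (i j : V) :
    0 ≤ G.adjMatrix ℝ i j := by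
  rw [adjMatrix_apply]
  split_ifs <;> norm_num

lemma adjMatrix_apply_mono {V : Type*} {G H : SimpleGraph V} (h : G ≤ H) (i j : V) :
    G.adjMatrix ℝ i j ≤ H.adjMatrix ℝ i j := by
  simp only [adjMatrix_apply]
  split_ifs with hG hH
  · exact le_rfl
  · exact absurd (h hG) hH
  · exact zero_le_one
  · exact le_rfl

variable {V W : Type*} [Fintype V] [Fintype W] {G H : SimpleGraph V}

lemma specRad_eq_maxEigenvalue {n : ℕ} (G : SimpleGraph (Fin n)) :
    specRad G = maxEigenvalue (G.adjMatrix ℝ) := by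
  rw [maxEigenvalue_eq_sSup_spectrum,
    (adjMatrix_isHermitian G).spectrum_real_eq_range_eigenvalues]
  rfl

lemma maxEigenvalue_adjMatrix_congr {K : SimpleGraph W} (e : G ≃g K) :
    maxEigenvalue (G.adjMatrix ℝ) = maxEigenvalue (K.adjMatrix ℝ) := by
  rw [maxEigenvalue_eq_sSup_spectrum, maxEigenvalue_eq_sSup_spectrum, ← e.reindex_adjMatrix ℝ,
    ← AlgEquiv.spectrum_eq (Matrix.reindexAlgEquiv ℝ ℝ e.toEquiv) (G.adjMatrix ℝ)]
  rfl

lemma maxEigenvalue_adjMatrix_mono [Nonempty V] (h : G ≤ H) :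
    maxEigenvalue (G.adjMatrix ℝ) ≤ maxEigenvalue (H.adjMatrix ℝ) :=
  maxEigenvalue_mono (adjMatrix_isHermitian G) (adjMatrix_isHermitian H)
    (adjMatrix_apply_nonneg G) (adjMatrix_apply_mono h)

/-- The Rayleigh quotient of the indicator function of `S` is the average degree inside `S`. -/
lemma le_maxEigenvalue_adjMatrix {S : Finset V} (hS : S.Nonempty) {d : ℕ}
    (hd : ∀ v ∈ S, d ≤ #{w ∈ S | G.Adj v w}) : d ≤ maxEigenvalue (G.adjMatrix ℝ) := by
  set x : V → ℝ := fun v => if v ∈ S then 1 else 0 with hx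
  have hxx : x ⬝ᵥ x = #S := by simp [dotProduct, hx]
  have hS₀ : (0 : ℝ) < #S := by exact_mod_cast hS.card_pos
  refine le_of_mul_le_mul_right ?_ hS₀
  calc (d : ℝ) * #S = ∑ _v ∈ S, (d : ℝ) := by rw [sum_const, nsmul_eq_mul, mul_comm]
    _ ≤ ∑ v ∈ S, (#{w ∈ S | G.Adj v w} : ℝ) :=
        sum_le_sum fun v hv => by exact_mod_cast hd v hv
    _ = x ⬝ᵥ G.adjMatrix ℝ *ᵥ x := by
        have hnbr (v) : G.neighborFinset v ∩ S = {w ∈ S | G.Adj v w} := by ext; simp [and_comm]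
        simp [dotProduct, hx, adjMatrix_mulVec_apply, hnbr]
    _ ≤ maxEigenvalue (G.adjMatrix ℝ) * #S :=
        hxx ▸ dotProduct_mulVec_le_maxEigenvalue_mul (adjMatrix_isHermitian G) x

lemma maxEigenvalue_adjMatrix_pos {u v : V} (h : G.Adj u v) :
    0 < maxEigenvalue (G.adjMatrix ℝ) := by
  refine lt_of_lt_of_le one_pos (Nat.cast_one (R := ℝ) ▸
    le_maxEigenvalue_adjMatrix (S := {u, v}) (insert_nonempty _ _) fun w hw => ?_)
  rcases mem_insert.mp hw with rfl | hw
  · exact card_pos.mpr ⟨v, by simpa using h⟩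
  · rw [mem_singleton.mp hw]
    exact card_pos.mpr ⟨u, by simpa using h.symm⟩

/-- A nonnegative eigenvector can only vanish on whole components, and it vanishes at isolated
vertices. -/
lemma pos_of_adj_of_mulVec_eq {x : V → ℝ} (hx₀ : x ≠ 0) (hx : 0 ≤ x)
    (hGx : G.adjMatrix ℝ *ᵥ x = maxEigenvalue (G.adjMatrix ℝ) • x)
    (hG : ∀ u v, G.degree u ≠ 0 → G.degree v ≠ 0 → G.Reachable u v) {u v : V} (huv : G.Adj u v) :
    0 < x v := by
  have hsum (w) : ∑ z ∈ G.neighborFinset w, x z = maxEigenvalue (G.adjMatrix ℝ) * x w := by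
    rw [← adjMatrix_mulVec_apply, hGx, Pi.smul_apply, smul_eq_mul]
  obtain ⟨k, hk⟩ := Function.ne_iff.mp hx₀
  have hkdeg : G.degree k ≠ 0 := fun h => by
    have := hsum k
    rw [← card_neighborFinset_eq_degree, card_eq_zero] at h
    rw [h, sum_empty, eq_comm, mul_eq_zero] at this
    exact this.elim (maxEigenvalue_adjMatrix_pos huv).ne' hk
  have hzero {w z} (hwz : G.Adj w z) (hw : x w = 0) : x z = 0 := by
    have := hsum w
    rw [hw, mul_zero, sum_eq_zero_iff_of_nonneg fun z _ => hx z] at this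
    exact this z (by simpa using hwz)
  obtain ⟨p⟩ := hG v k ((G.degree_pos_iff_exists_adj v).mpr ⟨u, huv.symm⟩).ne' hkdeg
  refine (hx v).lt_of_ne' fun hv => hk ?_
  clear hk hkdeg huv
  induction p with
  | nil => exact hv
  | cons h _ ih => exact ih (hzero h hv)

lemma eq_of_le_of_maxEigenvalue_adjMatrix_eq [Nonempty V] (hle : G ≤ H)
    (heq : maxEigenvalue (G.adjMatrix ℝ) = maxEigenvalue (H.adjMatrix ℝ))
    (hH : ∀ u v, H.degree u ≠ 0 → H.degree v ≠ 0 → H.Reachable u v) : G = H := by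
  obtain ⟨x, hx₀, hx, hGx, hHx⟩ := exists_nonneg_mulVec_eq_and_eq (adjMatrix_isHermitian G)
    (adjMatrix_isHermitian H) (adjMatrix_apply_nonneg G) (adjMatrix_apply_mono hle) heq
  refine hle.antisymm fun u v huv => ?_
  by_contra hGuv
  have hsum := congrFun (hGx.trans hHx.symm) u
  rw [adjMatrix_mulVec_apply, adjMatrix_mulVec_apply] at hsum
  refine hsum.not_lt (sum_lt_sum_of_subset (i := v) (fun w hw => ?_) (by simpa using huv)
    (by simpa using hGuv) (pos_of_adj_of_mulVec_eq hx₀ hx hHx hH huv) fun w _ _ => hx w)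
  rw [mem_neighborFinset] at hw ⊢
  exact hle hw

/-- `A² x = λ² x`, and every row of `A²` sums to at most `M`; look at the largest entry of `x`. -/
lemma sq_maxEigenvalue_adjMatrix_le [Nonempty V] {M : ℕ}
    (hM : ∀ v, ∑ w ∈ G.neighborFinset v, G.degree w ≤ M) :
    maxEigenvalue (G.adjMatrix ℝ) ^ 2 ≤ M := by
  obtain ⟨x, hx₀, hx, hGx⟩ := exists_nonneg_mulVec_eq_maxEigenvalue_smul
    (adjMatrix_isHermitian G) (adjMatrix_apply_nonneg G)
  have hsum (w) : ∑ z ∈ G.neighborFinset w, x z = maxEigenvalue (G.adjMatrix ℝ) * x w := by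
    rw [← adjMatrix_mulVec_apply, hGx, Pi.smul_apply, smul_eq_mul]
  obtain ⟨v, hv⟩ := Finite.exists_max x
  have hxv : 0 < x v := by
    refine (hx v).lt_of_ne' fun h => hx₀ (funext fun w => ?_)
    exact ((hv w).trans h.le).antisymm (hx w)
  refine le_of_mul_le_mul_right ?_ hxv
  calc maxEigenvalue (G.adjMatrix ℝ) ^ 2 * x v
      = ∑ w ∈ G.neighborFinset v, ∑ z ∈ G.neighborFinset w, x z := by
        simp_rw [hsum, ← mul_sum, hsum]
        ring
    _ ≤ ∑ w ∈ G.neighborFinset v, ∑ _z ∈ G.neighborFinset w, x v :=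
        sum_le_sum fun w _ => sum_le_sum fun z _ => hv z
    _ = (∑ w ∈ G.neighborFinset v, G.degree w : ℕ) * x v := by simp [sum_mul]
    _ ≤ M * x v := mul_le_mul_of_nonneg_right (by exact_mod_cast hM v) hxv.le

lemma sum_degree_neighborFinset_add_card_le (hG : ∀ v, 1 ≤ G.degree v) (v : V) :
    ∑ w ∈ G.neighborFinset v, G.degree w + Fintype.card V ≤ 2 * #G.edgeFinset + 1 := by
  have hv : v ∉ G.neighborFinset v := G.notMem_neighborFinset_self v
  have hcompl : #(insert v (G.neighborFinset v))ᶜ ≤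
      ∑ w ∈ (insert v (G.neighborFinset v))ᶜ, G.degree w :=
    (mul_one _).symm.trans_le (card_nsmul_le_sum _ _ 1 fun w _ => hG w)
  have hcard := card_add_card_compl (insert v (G.neighborFinset v))
  have hsum := sum_add_sum_compl (insert v (G.neighborFinset v)) fun w => G.degree w
  rw [card_insert_of_notMem hv, card_neighborFinset_eq_degree] at hcard
  rw [sum_insert hv, sum_degrees_eq_twice_card_edges] at hsum
  omega

/-- Hong's bound, for graphs without isolated vertices. -/
lemma sq_maxEigenvalue_adjMatrix_le_edges [Nonempty V] (hG : ∀ v, 1 ≤ G.degree v) :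
    maxEigenvalue (G.adjMatrix ℝ) ^ 2 + Fintype.card V ≤ 2 * #G.edgeFinset + 1 := by
  have hM (v) := sum_degree_neighborFinset_add_card_le hG v
  have hle := hM (Classical.arbitrary V)
  have := sq_maxEigenvalue_adjMatrix_le (G := G)
    (M := 2 * #G.edgeFinset + 1 - Fintype.card V) fun v => by have := hM v; omega
  rw [Nat.cast_sub (by omega)] at this
  push_cast at this
  linarith

lemma sum_degree_add_sum_degree_compl (G : SimpleGraph V) :
    ∑ v, G.degree v + ∑ v, Gᶜ.degree v = Fintype.card V * (Fintype.card V - 1) := by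
  rw [← sum_add_distrib, ← smul_eq_mul, ← card_univ, ← sum_const]
  refine sum_congr rfl fun v _ => ?_
  have := G.degree_lt_card_verts v
  rw [degree_compl, card_univ]
  omega

lemma card_edgeFinset_compl_add_two_le (hG : ∀ v, 1 ≤ G.degree v) (hV : 2 ≤ Fintype.card V)
    (h : (Fintype.card V : ℝ) - 2 ≤ maxEigenvalue (G.adjMatrix ℝ)) :
    #Gᶜ.edgeFinset + 2 ≤ Fintype.card V := by
  have : Nonempty V := Fintype.card_pos_iff.mp (by omega)
  have hHong := sq_maxEigenvalue_adjMatrix_le_edges hG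
  have hsum := sum_degree_add_sum_degree_compl G
  rw [sum_degrees_eq_twice_card_edges, sum_degrees_eq_twice_card_edges] at hsum
  obtain ⟨m, hm⟩ := Nat.exists_eq_add_of_le' hV
  rw [hm, show m + 2 - 1 = m + 1 from rfl] at hsum
  rw [hm] at h hHong ⊢
  push_cast at h hHong
  have hsq : (m : ℝ) ^ 2 ≤ maxEigenvalue (G.adjMatrix ℝ) ^ 2 :=
    pow_le_pow_left₀ m.cast_nonneg (by linarith) 2
  have hedges : m ^ 2 + (m + 2) ≤ 2 * #G.edgeFinset + 1 := by
    have := (add_le_add_left hsq _).trans hHong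
    exact_mod_cast this
  nlinarith

end AdjMatrix

section Degree

variable {V : Type*} {F G : SimpleGraph V} {u x z : V}

lemma degree_sup_edge (hux : u ≠ x) (h : ¬ F.Adj u x) (v : V) [Fintype (F.neighborSet v)]
    [Fintype ((F ⊔ edge u x).neighborSet v)] :
    (F ⊔ edge u x).degree v = F.degree v + if v = u ∨ v = x then 1 else 0 := by
  have hxu : ¬ F.Adj x u := fun h' => h h'.symm
  simp only [← card_neighborFinset_eq_degree]
  split_ifs with hv
  · rcases hv with rfl | rfl
    · rw [← card_insert_of_notMem (a := x) (by simpa using h)]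
      congr 1
      ext w
      simp only [mem_neighborFinset, mem_insert, sup_adj, edge_adj]
      grind
    · rw [← card_insert_of_notMem (a := u) (by simpa using hxu)]
      congr 1
      ext w
      simp only [mem_neighborFinset, mem_insert, sup_adj, edge_adj]
      grind
  · rw [add_zero]
    congr 1
    ext w
    simp only [mem_neighborFinset, sup_adj, edge_adj]
    grind

lemma deleteEdges_sup_edge (h : F.Adj x z) : F.deleteEdges {s(x, z)} ⊔ edge x z = F := by
  ext v w
  simp only [sup_adj, edge_adj, deleteEdges_adj, Set.mem_singleton_iff, Sym2.eq_iff]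
  have := h.symm
  grind [SimpleGraph.Adj.ne]

lemma degree_deleteEdges (h : F.Adj x z) (v : V) [Fintype (F.neighborSet v)]
    [Fintype ((F.deleteEdges {s(x, z)}).neighborSet v)] :
    (F.deleteEdges {s(x, z)}).degree v + (if v = x ∨ v = z then 1 else 0) = F.degree v := by
  have : Fintype ((F.deleteEdges {s(x, z)} ⊔ edge x z).neighborSet v) := by
    rwa [deleteEdges_sup_edge h]
  rw [← degree_sup_edge h.ne (by simp)]
  congr!
  exact deleteEdges_sup_edge h

/-- The graph obtained from `F` by exchanging the edge `xz` for the edge `ux`, as in the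
augmentation along an alternating path `u, x, z`. -/
def exchange (F : SimpleGraph V) (u x z : V) : SimpleGraph V :=
  F.deleteEdges {s(x, z)} ⊔ edge u x

lemma exchange_le (h : F ≤ G) (hux : G.Adj u x) : exchange F u x z ≤ G :=
  sup_le ((F.deleteEdges_le _).trans h) ((edge_le_iff _).mpr (Or.inr hux))

lemma mem_edgeSet_exchange {e : Sym2 V} (he : e ∈ F.edgeSet) (hne : s(x, z) ≠ e) :
    e ∈ (exchange F u x z).edgeSet := by
  rw [exchange, edgeSet_sup, edgeSet_deleteEdges]
  exact Or.inl ⟨he, hne.symm⟩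

lemma degree_exchange (hux : u ≠ x) (h : ¬ F.Adj u x) (hxz : F.Adj x z) (v : V)
    [Fintype (F.neighborSet v)] [Fintype ((exchange F u x z).neighborSet v)] :
    (exchange F u x z).degree v + (if v = z then 1 else 0) =
      F.degree v + if v = u then 1 else 0 := by
  have : Fintype ((F.deleteEdges {s(x, z)}).neighborSet v) :=
    ((F.neighborSet v).toFinite.subset (neighborSet_mono (F.deleteEdges_le _) v)).fintype
  have hdel := degree_deleteEdges hxz v
  have hne := hxz.ne
  unfold exchange at *
  rw [degree_sup_edge hux (by simp [h])]
  grind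

lemma ncard_neighborSet_eq_degree (v : V) [Fintype (F.neighborSet v)] :
    (F.neighborSet v).ncard = F.degree v := by
  rw [Set.ncard_eq_toFinset_card', Set.toFinset_card, card_neighborSet_eq_degree]

variable [Fintype V]

lemma degree_sdiff_add_degree (h : F ≤ G) (v : V) :
    (G \ F).degree v + F.degree v = G.degree v := by
  have hsub : F.neighborFinset v ⊆ G.neighborFinset v := fun w hw => by
    rw [mem_neighborFinset] at hw ⊢
    exact h hw
  rw [← card_neighborFinset_eq_degree, neighborFinset_sdiff, card_sdiff_of_subset hsub,
    card_neighborFinset_eq_degree, card_neighborFinset_eq_degree]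
  exact Nat.sub_add_cancel (degree_le_of_le h)

lemma degree_sdiff_add_degree_add_degree_compl (h : F ≤ G) (v : V) :
    (G \ F).degree v + F.degree v + Gᶜ.degree v + 1 = Fintype.card V := by
  have := G.degree_lt_card_verts v
  rw [degree_sdiff_add_degree h, degree_compl]
  omega

lemma sum_card_neighborFinset_inter_comm [DecidableEq V] (G : SimpleGraph V)
    [DecidableRel G.Adj] (X A : Finset V) :
    ∑ x ∈ X, #(G.neighborFinset x ∩ A) = ∑ z ∈ A, #(G.neighborFinset z ∩ X) := by
  convert sum_card_bipartiteAbove_eq_sum_card_bipartiteBelow (s := X) (t := A) G.Adj using 3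
  · ext; simp [bipartiteAbove, and_comm]
  · ext; simp [bipartiteBelow, and_comm, adj_comm]

lemma sum_degree_le_of_neighborFinset_subset [DecidableRel G.Adj] {X A : Finset V}
    (h : ∀ x ∈ X, G.neighborFinset x ⊆ A) : ∑ x ∈ X, G.degree x ≤ ∑ z ∈ A, G.degree z :=
  calc ∑ x ∈ X, G.degree x = ∑ x ∈ X, #(G.neighborFinset x ∩ A) :=
        sum_congr rfl fun x hx => by rw [inter_eq_left.mpr (h x hx), card_neighborFinset_eq_degree]
    _ = ∑ z ∈ A, #(G.neighborFinset z ∩ X) := sum_card_neighborFinset_inter_comm G X A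
    _ ≤ ∑ z ∈ A, G.degree z := sum_le_sum fun _ _ => card_le_card inter_subset_left

lemma sum_degree_le_card_edgeFinset_add_choose (G : SimpleGraph V) [DecidableRel G.Adj]
    (K : Finset V) :
    ∑ v ∈ K, G.degree v ≤ #G.edgeFinset + (#K).choose 2 := by
  have hdeg : ∀ v ∈ K, G.degree v ≤ #(G.neighborFinset v ∩ Kᶜ) + (#K - 1) := fun v hv => by
    rw [← card_erase_of_mem hv, ← card_neighborFinset_eq_degree]
    refine (card_le_card fun w hw => ?_).trans (card_union_le _ _)
    have := (G.mem_neighborFinset v w).mp hw |>.ne'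
    simp only [mem_union, mem_inter, mem_compl, mem_erase]
    tauto
  have hout : ∑ v ∈ K, #(G.neighborFinset v ∩ Kᶜ) ≤ ∑ v ∈ Kᶜ, G.degree v := by
    rw [sum_card_neighborFinset_inter_comm]
    exact sum_le_sum fun _ _ => card_le_card inter_subset_left
  have hK := sum_le_sum hdeg
  have htotal := sum_add_sum_compl K fun v => G.degree v
  rw [sum_add_distrib, sum_const, smul_eq_mul] at hK
  rw [sum_degrees_eq_twice_card_edges] at htotal
  have hdvd : #K * (#K - 1) = 2 * (#K).choose 2 := by
    rw [Nat.choose_two_right, Nat.mul_div_cancel' (Nat.even_mul_pred_self _).two_dvd]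
  omega

lemma card_mul_le_of_forall_le_degree [DecidableRel G.Adj] {K : Finset V} {m : ℕ}
    (hK : ∀ v ∈ K, m ≤ G.degree v) :
    #K * m ≤ #G.edgeFinset + (#K).choose 2 :=
  (card_nsmul_le_sum K _ m hK).trans (sum_degree_le_card_edgeFinset_add_choose G K)

end Degree

section PartialFactor

variable {V : Type*} [Fintype V] {F G : SimpleGraph V} {e : Sym2 V} {a : ℕ} {u w x y z : V}

/-- A spanning subgraph of `G` containing `e` whose degrees are at most `a`: for every `b ≥ a`, it
only fails to be an `[a,b]`-factor at its deficient vertices, those of degree less than `a`. -/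
structure IsPartialFactor (G F : SimpleGraph V) (e : Sym2 V) (a : ℕ) : Prop where
  le : F ≤ G
  mem_edgeSet : e ∈ F.edgeSet
  degree_le : ∀ v, F.degree v ≤ a

/-- The number of edge ends of `F`, each counted with the number of vertices not adjacent in `G`
to the vertex where it lies. Maximizing it confines the deficient vertices of a partial factor to
those with few non-neighbours. -/
noncomputable def weight (G F : SimpleGraph V) : ℕ := ∑ v, F.degree v * (1 + Gᶜ.degree v)

/-- A partial factor of largest weight. -/
structure IsMaxPartialFactor (G F : SimpleGraph V) (e : Sym2 V) (a : ℕ) : Prop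
    extends IsPartialFactor G F e a where
  weight_le : ∀ F', IsPartialFactor G F' e a → weight G F' ≤ weight G F

/-- The vertices reached from `u` by an edge of `G` outside `F` followed by an edge of `F` other
than `e`. -/
noncomputable def alternatingNbrs (G F : SimpleGraph V) (e : Sym2 V) (u : V) : Finset V :=
  ((G \ F).neighborFinset u).biUnion fun x => (F.deleteEdges {e}).neighborFinset x

lemma mem_alternatingNbrs :
    z ∈ alternatingNbrs G F e u ↔ ∃ x, (G \ F).Adj u x ∧ (F.deleteEdges {e}).Adj x z := by
  simp only [alternatingNbrs, mem_biUnion, mem_neighborFinset]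

lemma notMem_alternatingNbrs_self : u ∉ alternatingNbrs G F e u := fun h => by
  obtain ⟨x, hux, hxu⟩ := mem_alternatingNbrs.mp h
  exact hux.2 hxu.1.symm

lemma weight_lt_weight {F' : SimpleGraph V} (h : ∀ v, F.degree v ≤ F'.degree v)
    (hu : F.degree u < F'.degree u) : weight G F < weight G F' :=
  sum_lt_sum (fun v _ => Nat.mul_le_mul_right _ (h v))
    ⟨u, mem_univ u, Nat.mul_lt_mul_of_pos_right hu (by omega)⟩

lemma exists_isMaxPartialFactor (ha : 1 ≤ a) (he : e ∈ G.edgeSet) :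
    ∃ F, IsMaxPartialFactor G F e a := by
  induction e using Sym2.ind with | _ p q
  have hpq : G.Adj p q := he
  have hedge : IsPartialFactor G (⊥ ⊔ edge p q) s(p, q) a := by
    refine ⟨sup_le bot_le ((edge_le_iff _).mpr (Or.inr hpq)), ?_, fun v => ?_⟩
    · simp [hpq.ne]
    · rw [degree_sup_edge hpq.ne (by simp), bot_degree]
      split_ifs <;> omega
  obtain ⟨F, hF, hmax⟩ := Set.exists_max_image {F | IsPartialFactor G F s(p, q) a} (weight G)
    (Set.toFinite _) ⟨_, hedge⟩
  exact ⟨F, hF, hmax⟩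

lemma IsPartialFactor.sum_degree_le (hF : IsPartialFactor G F e a) (A : Finset V) :
    ∑ z ∈ A, F.degree z ≤ #A * a :=
  sum_le_card_nsmul _ _ _ fun z _ => hF.degree_le z

lemma sum_degree_le_sum_alternatingNbrs (he : e ∈ F.edgeSet) (u : V) :
    ∑ x ∈ (G \ F).neighborFinset u, F.degree x ≤
      ∑ z ∈ alternatingNbrs G F e u, F.degree z + 2 := by
  induction e using Sym2.ind with | _ p q
  have hends : ∑ x ∈ (G \ F).neighborFinset u, (if x = p ∨ x = q then 1 else 0) ≤ 2 := by
    rw [← card_filter]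
    refine (card_le_card (t := {p, q}) fun x hx => ?_).trans card_le_two
    simpa using (mem_filter.mp hx).2
  calc ∑ x ∈ (G \ F).neighborFinset u, F.degree x
      = ∑ x ∈ (G \ F).neighborFinset u, (F.deleteEdges {s(p, q)}).degree x +
          ∑ x ∈ (G \ F).neighborFinset u, (if x = p ∨ x = q then 1 else 0) := by
        rw [← sum_add_distrib]
        exact sum_congr rfl fun x _ => (degree_deleteEdges (F.mem_edgeSet.mp he) x).symm
    _ ≤ ∑ z ∈ alternatingNbrs G F s(p, q) u, (F.deleteEdges {s(p, q)}).degree z + 2 :=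
        add_le_add (sum_degree_le_of_neighborFinset_subset fun x hx z hz =>
          mem_alternatingNbrs.mpr ⟨x, by simpa only [mem_neighborFinset] using And.intro hx hz⟩)
          hends
    _ ≤ ∑ z ∈ alternatingNbrs G F s(p, q) u, F.degree z + 2 :=
        Nat.add_le_add_right (sum_le_sum fun z _ => degree_le_of_le (F.deleteEdges_le _)) 2

lemma alternatingNbrs_nonempty (he : e ∈ F.edgeSet) (hux : (G \ F).Adj u x)
    (hx : 2 ≤ F.degree x) : (alternatingNbrs G F e u).Nonempty := by
  have hdeg : 0 < (F.deleteEdges {e}).degree x := by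
    induction e using Sym2.ind with | _ p q
    have := degree_deleteEdges (F.mem_edgeSet.mp he) x
    split_ifs at this <;> omega
  obtain ⟨z, hxz⟩ := (degree_pos_iff_exists_adj _ x).mp hdeg
  exact ⟨z, mem_alternatingNbrs.mpr ⟨x, hux, hxz⟩⟩

namespace IsMaxPartialFactor

lemma degree_eq_of_adj (hF : IsMaxPartialFactor G F e a) (hu : F.degree u < a)
    (hux : (G \ F).Adj u x) : F.degree x = a := by
  by_contra hxa
  have hx := lt_of_le_of_ne (hF.degree_le x) hxa
  have hdeg (v) [Fintype ((F ⊔ edge u x).neighborSet v)] := degree_sup_edge hux.ne hux.2 v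
  refine (weight_lt_weight (G := G) (F' := F ⊔ edge u x) (u := u) (fun v => ?_) ?_).not_ge
    (hF.weight_le _ ⟨sup_le hF.le ((edge_le_iff _).mpr (Or.inr hux.1)),
      edgeSet_mono le_sup_left hF.mem_edgeSet, fun v => ?_⟩)
  · rw [hdeg]; omega
  · rw [hdeg]; simp
  · have := hF.degree_le v
    rw [hdeg]
    grind

/-- Exchanging `xz` for `ux` cannot increase the weight. -/
lemma degree_compl_le (hF : IsMaxPartialFactor G F e a) (hu : F.degree u < a)
    (hz : z ∈ alternatingNbrs G F e u) : Gᶜ.degree u ≤ Gᶜ.degree z := by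
  obtain ⟨x, hux, hxz⟩ := mem_alternatingNbrs.mp hz
  have hdeg (v) := degree_exchange hux.ne hux.2 hxz.1 v
  have hweight := hF.weight_le (exchange F u x z)
    ⟨exchange_le hF.le hux.1, mem_edgeSet_exchange hF.mem_edgeSet (deleteEdges_adj.mp hxz).2,
     fun v => by
      have := hdeg v
      have := hF.degree_le v
      grind⟩
  have hsum := sum_congr rfl fun v (_ : v ∈ univ) => congrArg (· * (1 + Gᶜ.degree v)) (hdeg v)
  simp only [add_mul, sum_add_distrib, ite_mul, one_mul, zero_mul, sum_ite_eq', mem_univ,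
    if_true] at hsum
  simp only [weight, mul_add, mul_one, sum_add_distrib] at hsum hweight
  omega

/-- Otherwise `u x y w` would be an augmenting path. -/
lemma not_adj_of_adj (hF : IsMaxPartialFactor G F e a) (hu : F.degree u < a)
    (hw : F.degree w < a) (huw : u = w → F.degree u + 2 ≤ a) (hux : (G \ F).Adj u x)
    (hwy : (G \ F).Adj w y) : ¬ (F.deleteEdges {e}).Adj x y := by
  intro hxy
  have hxa := hF.degree_eq_of_adj hu hux
  have hya := hF.degree_eq_of_adj hw hwy
  have hyu : y ≠ u := by rintro rfl; omega
  have hnadj : ¬ (exchange F u x y).Adj w y := by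
    have := hxy.ne
    have := hwy.2
    simp only [exchange, sup_adj, deleteEdges_adj, edge_adj]
    grind
  have hdeg (v) [Fintype ((exchange F u x y ⊔ edge w y).neighborSet v)] :
      (exchange F u x y ⊔ edge w y).degree v =
        F.degree v + (if v = u then 1 else 0) + if v = w then 1 else 0 := by
    have := degree_exchange hux.ne hux.2 hxy.1 v
    have := hwy.ne
    rw [degree_sup_edge hwy.ne hnadj]
    grind
  refine (weight_lt_weight (G := G) (F' := exchange F u x y ⊔ edge w y) (u := u)
    (fun v => ?_) ?_).not_ge (hF.weight_le _
      ⟨sup_le (exchange_le hF.le hux.1) ((edge_le_iff _).mpr (Or.inr hwy.1)),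
        edgeSet_mono le_sup_left (mem_edgeSet_exchange hF.mem_edgeSet (deleteEdges_adj.mp hxy).2),
        fun v => ?_⟩)
  · rw [hdeg]; omega
  · rw [hdeg, if_pos rfl]; omega
  · have := hF.degree_le v
    rw [hdeg]
    grind

lemma mul_degree_sdiff_le (hF : IsMaxPartialFactor G F e a) (hu : F.degree u < a) :
    a * (G \ F).degree u ≤ ∑ z ∈ alternatingNbrs G F e u, F.degree z + 2 := by
  have h := sum_degree_le_sum_alternatingNbrs (G := G) hF.mem_edgeSet u
  rwa [sum_congr rfl fun x hx => hF.degree_eq_of_adj hu ((mem_neighborFinset _ _ _).mp hx),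
    sum_const, smul_eq_mul, card_neighborFinset_eq_degree, mul_comm] at h

lemma card_mul_degree_compl_le (hF : IsMaxPartialFactor G F e a) (hu : F.degree u < a) {k : ℕ}
    (hk : k ≤ #(alternatingNbrs G F e u) + 1) :
    k * Gᶜ.degree u ≤ #Gᶜ.edgeFinset + k.choose 2 := by
  rw [← card_insert_of_notMem notMem_alternatingNbrs_self] at hk
  obtain ⟨K, hK, rfl⟩ := exists_subset_card_eq hk
  refine card_mul_le_of_forall_le_degree fun v hv => ?_
  rcases mem_insert.mp (hK hv) with rfl | hv
  · exact le_rfl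
  · exact hF.degree_compl_le hu hv

lemma card_alternatingNbrs_mul_degree_compl_le (hF : IsMaxPartialFactor G F e a)
    (hu : F.degree u < a) :
    (#(alternatingNbrs G F e u) + 1) * Gᶜ.degree u ≤ 2 * #Gᶜ.edgeFinset := by
  rw [← card_insert_of_notMem notMem_alternatingNbrs_self, ← sum_degrees_eq_twice_card_edges]
  refine (card_nsmul_le_sum _ (fun v => Gᶜ.degree v) _ fun v hv => ?_).trans
    (sum_le_univ_sum_of_nonneg fun _ => Nat.zero_le _)
  rcases mem_insert.mp hv with rfl | hv
  · exact le_rfl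
  · exact hF.degree_compl_le hu hv

/-- A set of deficient vertices and the alternating neighbourhood of `u` both avoid the
`G \ F`-neighbours of `w`. -/
lemma card_union_alternatingNbrs_add_degree_le (hF : IsMaxPartialFactor G F e a)
    (hu : F.degree u < a) (hw : F.degree w < a) (huw : u = w → F.degree u + 2 ≤ a)
    {D : Finset V} (hD : ∀ v ∈ D, F.degree v < a) :
    #(D ∪ alternatingNbrs G F e u) + (G \ F).degree w ≤ Fintype.card V := by
  rw [← card_neighborFinset_eq_degree, ← card_union_of_disjoint]
  · exact card_le_univ _
  rw [Finset.disjoint_left]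
  intro v hv hwv
  rw [mem_neighborFinset] at hwv
  rcases mem_union.mp hv with hv | hv
  · exact (hD v hv).ne (hF.degree_eq_of_adj hw hwv)
  · obtain ⟨x, hux, hxv⟩ := mem_alternatingNbrs.mp hv
    exact hF.not_adj_of_adj hu hw huw hux hwv hxv

end IsMaxPartialFactor

end PartialFactor

section Factor

variable {V : Type*} [Fintype V] {F G : SimpleGraph V} {e : Sym2 V} {a b : ℕ} {u w : V}

lemma IsPartialFactor.hasABFactorThrough_of_forall_degree_eq {p q : V}
    (hF : IsPartialFactor G F s(p, q) a) (hab : a ≤ b) (h : ∀ v, F.degree v = a) :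
    HasABFactorThrough G a b p q := by
  refine ⟨F, hF.le, hF.mem_edgeSet, fun v => ?_⟩
  rw [ncard_neighborSet_eq_degree, h]
  exact ⟨le_rfl, hab⟩

lemma IsPartialFactor.hasABFactorThrough_of_unique_deficient {p q : V}
    (hF : IsPartialFactor G F s(p, q) a) (hab : a < b) (hu : F.degree u + 1 = a)
    (hu' : ∀ v, F.degree v < a → v = u) (hGu : 0 < (G \ F).degree u) :
    HasABFactorThrough G a b p q := by
  obtain ⟨x, hux⟩ := (degree_pos_iff_exists_adj _ u).mp hGu
  refine ⟨F ⊔ edge u x, sup_le hF.le ((edge_le_iff _).mpr (Or.inr hux.1)),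
    Or.inl hF.mem_edgeSet, fun v => ?_⟩
  rw [ncard_neighborSet_eq_degree, degree_sup_edge hux.ne hux.2]
  have := hF.degree_le v
  have := hu' v
  grind

lemma IsPartialFactor.hasABFactorThrough_of_pair_deficient {p q x y : V}
    (hF : IsPartialFactor G F s(p, q) a) (hab : a < b) (huw : u ≠ w) (hu : F.degree u + 1 = a)
    (hw : F.degree w + 1 = a) (hD : ∀ v, F.degree v < a → v = u ∨ v = w)
    (hux : (G \ F).Adj u x) (hwy : (G \ F).Adj w y) (hxy : x ≠ y) (hxw : x ≠ w) :
    HasABFactorThrough G a b p q := by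
  have hnadj : ¬ (F ⊔ edge u x).Adj w y := by
    have := hwy.2
    simp only [sup_adj, edge_adj]
    grind
  refine ⟨F ⊔ edge u x ⊔ edge w y, sup_le (sup_le hF.le ((edge_le_iff _).mpr (Or.inr hux.1)))
    ((edge_le_iff _).mpr (Or.inr hwy.1)), Or.inl (Or.inl hF.mem_edgeSet), fun v => ?_⟩
  have := Fintype.ofFinite ((F ⊔ edge u x).neighborSet v)
  rw [ncard_neighborSet_eq_degree, degree_sup_edge hwy.ne hnadj, degree_sup_edge hux.ne hux.2]
  have := hF.degree_le v
  have := hD v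
  grind

lemma IsPartialFactor.degree_sdiff_pos (hF : IsPartialFactor G F e a) (hu : F.degree u < a)
    (hGu : a ≤ G.degree u) : 0 < (G \ F).degree u := by
  have := degree_sdiff_add_degree hF.le u
  omega

namespace IsMaxPartialFactor

lemma degree_sdiff_le (hF : IsMaxPartialFactor G F e a) (ha : 2 ≤ a) (hu : F.degree u < a) :
    (G \ F).degree u ≤ #(alternatingNbrs G F e u) + 1 := by
  have h := (hF.mul_degree_sdiff_le hu).trans
    (Nat.add_le_add_right (hF.sum_degree_le (alternatingNbrs G F e u)) 2)
  by_contra! hlt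
  nlinarith

lemma degree_sdiff_le_of_mem (hF : IsMaxPartialFactor G F e a) (ha : 2 ≤ a)
    (hu : F.degree u < a) (hw : F.degree w < a) (hwA : w ∈ alternatingNbrs G F e u) :
    (G \ F).degree u ≤ #(alternatingNbrs G F e u) := by
  have h := hF.mul_degree_sdiff_le hu
  have hlt := sum_lt_sum (fun z (_ : z ∈ alternatingNbrs G F e u) => hF.degree_le z) ⟨w, hwA, hw⟩
  rw [sum_const, smul_eq_mul] at hlt
  by_contra! hlt
  nlinarith

lemma degree_compl_le_three (hF : IsMaxPartialFactor G F e a) (ha : 2 ≤ a)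
    (hV : 3 * a + 4 ≤ Fintype.card V) (hG : #Gᶜ.edgeFinset + 2 ≤ Fintype.card V)
    (hu : F.degree u < a) (hGu : a ≤ G.degree u) : Gᶜ.degree u ≤ 3 := by
  have hXA := hF.degree_sdiff_le ha hu
  have hA : 1 ≤ #(alternatingNbrs G F e u) := by
    obtain ⟨x, hux⟩ := (degree_pos_iff_exists_adj _ u).mp (hF.degree_sdiff_pos hu hGu)
    have hx := hF.degree_eq_of_adj hu hux
    exact card_pos.mpr (alternatingNbrs_nonempty hF.mem_edgeSet hux (by omega))
  have hcard := degree_sdiff_add_degree_add_degree_compl hF.le u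
  have h₂ : 2 * Gᶜ.degree u ≤ #Gᶜ.edgeFinset + 1 := hF.card_mul_degree_compl_le hu (by omega)
  have h₄ : 4 * Gᶜ.degree u ≤ #Gᶜ.edgeFinset + 6 := hF.card_mul_degree_compl_le hu (by omega)
  have hA₁ := hF.card_alternatingNbrs_mul_degree_compl_le hu
  by_contra! hlt
  have hk : Fintype.card V ≤ #(alternatingNbrs G F e u) + 1 + a + Gᶜ.degree u := by omega
  generalize Gᶜ.degree u = m at *
  generalize #(alternatingNbrs G F e u) + 1 = k at *
  generalize Fintype.card V = n at *
  have hkm : k * m + 4 ≤ 2 * n := by omega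
  have hm : 4 * m ≤ n + 4 := by omega
  have hkm' : 2 * n + 4 ≤ 3 * k + 3 * m := by omega
  zify at *
  nlinarith

lemma eq_and_degree_add_one_eq (hF : IsMaxPartialFactor G F e a) (ha : 2 ≤ a)
    (hV : 3 * a + 4 ≤ Fintype.card V) (hG : #Gᶜ.edgeFinset + 2 ≤ Fintype.card V)
    (hδ : ∀ v, a ≤ G.degree v) (hu : F.degree u < a) (hw : F.degree w < a) :
    u = w ∧ F.degree u + 1 = a := by
  by_contra hne
  have huw : u = w → F.degree u + 2 ≤ a := fun h => by
    have : F.degree u + 1 ≠ a := fun h' => hne ⟨h, h'⟩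
    omega
  have hcu := degree_sdiff_add_degree_add_degree_compl hF.le u
  have hcw := degree_sdiff_add_degree_add_degree_compl hF.le w
  have hmu := hF.degree_compl_le_three ha hV hG hu (hδ u)
  have hmw := hF.degree_compl_le_three ha hV hG hw (hδ w)
  have hXu := hF.degree_sdiff_le ha hu
  have hcard := hF.card_union_alternatingNbrs_add_degree_le hu hw huw (D := {u, w})
    (by simp [hu, hw])
  by_cases hwA : w ∈ alternatingNbrs G F e u
  · have hXu' := hF.degree_sdiff_le_of_mem ha hu hw hwA
    have : #(insert u (alternatingNbrs G F e u)) ≤ #({u, w} ∪ alternatingNbrs G F e u) :=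
      card_le_card (by grind)
    rw [card_insert_of_notMem notMem_alternatingNbrs_self] at this
    omega
  · have hdisj : Disjoint {u, w} (alternatingNbrs G F e u) := by
      simp [hwA, notMem_alternatingNbrs_self]
    rw [card_union_of_disjoint hdisj] at hcard
    by_cases h : u = w
    · have := huw h
      subst h
      rw [pair_eq_singleton, card_singleton] at hcard
      omega
    · rw [card_pair h] at hcard
      omega

end IsMaxPartialFactor

lemma not_even_card_mul_of_unique_deficient (hu : F.degree u + 1 = a)
    (hu' : ∀ v, v ≠ u → F.degree v = a) : ¬ Even (Fintype.card V * a) := by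
  have hsum : ∑ v, F.degree v + 1 = Fintype.card V * a := by
    rw [← add_sum_erase _ _ (mem_univ u), sum_congr rfl fun v hv => hu' v (ne_of_mem_erase hv),
      sum_const, card_erase_of_mem (mem_univ u), card_univ, smul_eq_mul]
    have := Fintype.card_pos_iff.mpr ⟨u⟩
    obtain ⟨m, hm⟩ := Nat.exists_eq_add_of_le' this
    rw [hm, Nat.add_sub_cancel, add_mul]
    omega
  rw [← hsum, sum_degrees_eq_twice_card_edges, Nat.not_even_iff_odd]
  exact odd_two_mul_add_one _

lemma isABCovered_of_two_le (ha : 2 ≤ a) (hab : a ≤ b)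
    (hV : 3 * a + 4 ≤ Fintype.card V) (hpar : a = b → Even (Fintype.card V * a))
    (hδ : ∀ v, a ≤ G.degree v) (hG : #Gᶜ.edgeFinset + 2 ≤ Fintype.card V) :
    IsABCovered G a b := by
  intro p q hpq
  obtain ⟨F, hF⟩ := exists_isMaxPartialFactor (a := a) (by omega) (G.mem_edgeSet.mpr hpq)
  by_cases hfactor : ∀ v, F.degree v = a
  · exact hF.hasABFactorThrough_of_forall_degree_eq hab hfactor
  push Not at hfactor
  obtain ⟨u, hu⟩ := hfactor
  replace hu := lt_of_le_of_ne (hF.degree_le u) hu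
  have hunique (v) (hv : F.degree v < a) : v = u ∧ F.degree v + 1 = a :=
    hF.eq_and_degree_add_one_eq ha hV hG hδ hv hu
  have hodd : ¬ Even (Fintype.card V * a) :=
    not_even_card_mul_of_unique_deficient (hunique u hu).2 fun v hv =>
      (hF.degree_le v).eq_of_not_lt fun h => hv (hunique v h).1
  exact hF.hasABFactorThrough_of_unique_deficient (hab.lt_of_ne fun h => hodd (hpar h))
    (hunique u hu).2 (fun v hv => (hunique v hv).1) (hF.degree_sdiff_pos hu (hδ u))

lemma IsMaxPartialFactor.card_add_card_le_of_eq_one (hF : IsMaxPartialFactor G F e 1)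
    (hu : F.degree u < 1) (hw : F.degree w < 1) (huw : u ≠ w) {D : Finset V}
    (hD : ∀ v ∈ D, F.degree v < 1) :
    Fintype.card V + #D ≤ Gᶜ.degree u + Gᶜ.degree w + 4 := by
  have hdisj : Disjoint D (alternatingNbrs G F e u) := by
    rw [Finset.disjoint_left]
    intro v hv hvA
    obtain ⟨x, -, hxv⟩ := mem_alternatingNbrs.mp hvA
    have := (degree_pos_iff_exists_adj F v).mpr ⟨x, hxv.1.symm⟩
    have := hD v hv
    omega
  have hcard := hF.card_union_alternatingNbrs_add_degree_le hu hw (fun h => absurd h huw) hD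
  rw [card_union_of_disjoint hdisj] at hcard
  have hXu := (hF.mul_degree_sdiff_le hu).trans
    (Nat.add_le_add_right (hF.sum_degree_le (alternatingNbrs G F e u)) 2)
  have hcu := degree_sdiff_add_degree_add_degree_compl hF.le u
  have hcw := degree_sdiff_add_degree_add_degree_compl hF.le w
  omega

lemma IsMaxPartialFactor.card_deficient_le_two (hF : IsMaxPartialFactor G F e 1)
    (hV : 6 ≤ Fintype.card V) (hG : #Gᶜ.edgeFinset + 2 ≤ Fintype.card V) {D : Finset V}
    (hD : ∀ v ∈ D, F.degree v < 1) : #D ≤ 2 := by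
  by_contra! hcard
  obtain ⟨u, w, t, hu, hw, ht, huw, hut, hwt⟩ := two_lt_card_iff.mp hcard
  have h₁ := hF.card_add_card_le_of_eq_one (hD u hu) (hD w hw) huw hD
  have h₂ := hF.card_add_card_le_of_eq_one (hD u hu) (hD t ht) hut hD
  have h₃ := hF.card_add_card_le_of_eq_one (hD w hw) (hD t ht) hwt hD
  have hsum := sum_degree_le_card_edgeFinset_add_choose Gᶜ {u, w, t}
  rw [card_eq_three.mpr ⟨u, w, t, huw, hut, hwt, rfl⟩, sum_insert (by simp [huw, hut]),
    sum_pair hwt, show Nat.choose 3 2 = 3 from rfl] at hsum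
  omega

lemma exists_ne_of_three_le_card_add_card {α : Type*} {s t : Finset α} (hs : s.Nonempty)
    (ht : t.Nonempty) (h : 3 ≤ #s + #t) : ∃ x ∈ s, ∃ y ∈ t, x ≠ y := by
  by_contra! heq
  obtain ⟨x, hx⟩ := hs
  obtain ⟨y, hy⟩ := ht
  have hs₁ : #s ≤ 1 :=
    card_le_one.mpr fun z hz z' hz' => (heq z hz y hy).trans (heq z' hz' y hy).symm
  have ht₁ : #t ≤ 1 :=
    card_le_one.mpr fun z hz z' hz' => (heq x hx z hz).symm.trans (heq x hx z' hz')
  omega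

lemma isABCovered_one (hb : 2 ≤ b) (hV : 6 ≤ Fintype.card V) (hδ : ∀ v, 1 ≤ G.degree v)
    (hG : #Gᶜ.edgeFinset + 2 ≤ Fintype.card V) : IsABCovered G 1 b := by
  intro p q hpq
  obtain ⟨F, hF⟩ := exists_isMaxPartialFactor le_rfl (G.mem_edgeSet.mpr hpq)
  have hcard := hF.card_deficient_le_two hV hG (D := {v | F.degree v < 1}) (by simp)
  by_cases hfactor : ∀ v, F.degree v = 1
  · exact hF.hasABFactorThrough_of_forall_degree_eq (by omega) hfactor
  push Not at hfactor
  obtain ⟨u, hu⟩ := hfactor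
  replace hu := lt_of_le_of_ne (hF.degree_le u) hu
  have hXu := hF.degree_sdiff_pos hu (hδ u)
  by_cases hunique : ∀ v, F.degree v < 1 → v = u
  · exact hF.hasABFactorThrough_of_unique_deficient hb (by omega) hunique hXu
  push Not at hunique
  obtain ⟨w, hw, hwu⟩ := hunique
  have hXw := hF.degree_sdiff_pos hw (hδ w)
  have hpair (v) (hv : F.degree v < 1) : v = u ∨ v = w := by
    by_contra! hne
    exact hcard.not_gt (two_lt_card_iff.mpr ⟨v, u, w, by simpa using hv, by simpa using hu,
      by simpa using hw, hne.1, hne.2, hwu.symm⟩)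
  have hsum := sum_degree_le_card_edgeFinset_add_choose Gᶜ {u, w}
  rw [sum_pair hwu.symm, card_pair hwu.symm, Nat.choose_self] at hsum
  have hcu := degree_sdiff_add_degree_add_degree_compl hF.le u
  have hcw := degree_sdiff_add_degree_add_degree_compl hF.le w
  obtain ⟨x, hux, y, hwy, hxy⟩ := exists_ne_of_three_le_card_add_card
    (s := (G \ F).neighborFinset u) (t := (G \ F).neighborFinset w)
    (card_pos.mp (by rwa [card_neighborFinset_eq_degree]))
    (card_pos.mp (by rwa [card_neighborFinset_eq_degree]))
    (by simp only [card_neighborFinset_eq_degree]; omega)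
  rw [mem_neighborFinset] at hux hwy
  have hx := hF.degree_eq_of_adj hu hux
  exact hF.hasABFactorThrough_of_pair_deficient hb hwu.symm (by omega) (by omega) hpair hux hwy
    hxy (by rintro rfl; omega)

lemma isABCovered_of_card_edgeFinset_compl (ha : 1 ≤ a) (hab : a ≤ b) (hb : 2 ≤ b)
    (hV : 3 * a + 4 ≤ Fintype.card V) (hpar : a = b → Even (Fintype.card V * a))
    (hδ : ∀ v, a ≤ G.degree v) (hG : #Gᶜ.edgeFinset + 2 ≤ Fintype.card V) :
    IsABCovered G a b := by
  obtain rfl | ha := ha.eq_or_lt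
  · exact isABCovered_one hb (by omega) hδ hG
  · exact isABCovered_of_two_le ha hab hV hpar hδ hG

lemma isABCovered_of_card_sub_two_le_maxEigenvalue (ha : 1 ≤ a) (hab : a ≤ b) (hb : 2 ≤ b)
    (hV : 3 * a + 4 ≤ Fintype.card V) (hpar : a = b → Even (Fintype.card V * a))
    (hδ : ∀ v, a ≤ G.degree v)
    (hρ : (Fintype.card V : ℝ) - 2 ≤ maxEigenvalue (G.adjMatrix ℝ)) : IsABCovered G a b :=
  isABCovered_of_card_edgeFinset_compl ha hab hb hV hpar hδ
    (card_edgeFinset_compl_add_two_le (fun v => ha.trans (hδ v)) (by omega) hρ)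

end Factor

section Hgraph

variable {n a : ℕ}

lemma Hgraph_adj {i j : Fin n} : (Hgraph n a).Adj i j ↔
    i ≠ j ∧ (0 < i.val ∧ 0 < j.val ∨ i.val = 0 ∧ 0 < j.val ∧ j.val < a ∨
      j.val = 0 ∧ 0 < i.val ∧ i.val < a) := by
  rw [Hgraph, fromRel_adj]
  tauto

lemma le_maxEigenvalue_adjMatrix_Hgraph (hn : 2 ≤ n) (a : ℕ) :
    (n : ℝ) - 2 ≤ maxEigenvalue ((Hgraph n a).adjMatrix ℝ) := by
  have : NeZero n := ⟨by omega⟩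
  have hS : #(univ.erase (0 : Fin n)) = n - 1 := by
    rw [card_erase_of_mem (mem_univ _), card_univ, Fintype.card_fin]
  rw [← Nat.cast_ofNat (n := 2), ← Nat.cast_sub hn]
  refine le_maxEigenvalue_adjMatrix (S := univ.erase 0) (card_pos.mp (by omega)) fun v hv => ?_
  have hsub : (univ.erase 0).erase v ⊆
      ({w ∈ univ.erase 0 | (Hgraph n a).Adj v w} : Finset (Fin n)) := by
    intro w hw
    obtain ⟨hwv, hw⟩ := mem_erase.mp hw
    exact mem_filter.mpr ⟨hw, Hgraph_adj.mpr ⟨hwv.symm, Or.inl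
      ⟨Fin.pos_iff_ne_zero.mpr (ne_of_mem_erase hv), Fin.pos_iff_ne_zero.mpr (ne_of_mem_erase hw)⟩⟩⟩
  have := card_le_card hsub
  rw [card_erase_of_mem hv, hS] at this
  omega

lemma Hgraph_reachable {u v : Fin n} (hu : (Hgraph n a).degree u ≠ 0)
    (hv : (Hgraph n a).degree v ≠ 0) : (Hgraph n a).Reachable u v := by
  have hclique {x y : Fin n} (hx : 0 < x.val) (hy : 0 < y.val) : (Hgraph n a).Reachable x y := by
    obtain rfl | hxy := eq_or_ne x y
    · rfl
    · exact (Hgraph_adj.mpr ⟨hxy, Or.inl ⟨hx, hy⟩⟩).reachable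
  have hreach {x : Fin n} (hx : (Hgraph n a).degree x ≠ 0) :
      ∃ y : Fin n, 0 < y.val ∧ (Hgraph n a).Reachable x y := by
    obtain hx₀ | hx₀ := Nat.eq_zero_or_pos x.val
    · obtain ⟨y, hxy⟩ := (degree_pos_iff_exists_adj _ x).mp (Nat.pos_of_ne_zero hx)
      have := Hgraph_adj.mp hxy
      exact ⟨y, by omega, hxy.reachable⟩
    · exact ⟨x, hx₀, .rfl⟩
  obtain ⟨x, hx, hux⟩ := hreach hu
  obtain ⟨y, hy, hvy⟩ := hreach hv
  exact (hux.trans (hclique hx hy)).trans hvy.symm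

lemma exists_perm_map_zero_and_lt [NeZero n] {S : Finset (Fin n)} {v : Fin n} (hv : v ∈ S) :
    ∃ σ : Equiv.Perm (Fin n), σ v = 0 ∧ ∀ w ∈ S, (σ w).val < #S := by
  set T : Finset (Fin n) := {j | j.val < #S} with hT
  have hcard : #S = #T := by
    rw [hT, Fin.card_filter_val_lt, min_eq_right (by simpa using card_le_univ S)]
  have h₀ : (0 : Fin n) ∈ T := by simpa [hT] using ⟨v, hv⟩
  let e := (equivOfCardEq hcard).setValue ⟨v, hv⟩ ⟨0, h₀⟩
  refine ⟨e.extendSubtype, ?_, fun w hw => ?_⟩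
  · rw [Equiv.extendSubtype_apply_of_mem e v hv, Equiv.setValue_eq]
  · simpa [hT] using Equiv.extendSubtype_mem e w hw

lemma exists_iso_le_Hgraph {G : SimpleGraph (Fin n)} {v : Fin n} (hv : G.degree v < a) :
    ∃ K : SimpleGraph (Fin n), Nonempty (G ≃g K) ∧ K ≤ Hgraph n a := by
  have : NeZero n := ⟨v.pos.ne'⟩
  obtain ⟨σ, hσv, hσ⟩ := exists_perm_map_zero_and_lt (mem_insert_self v (G.neighborFinset v))
  rw [card_insert_of_notMem (G.notMem_neighborFinset_self v), card_neighborFinset_eq_degree] at hσ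
  have hlt {w} (hw : G.Adj v w) : (σ w).val < a :=
    (hσ w (by simp [hw])).trans_le hv
  have hzero {w} (hw : (σ w).val = 0) : w = v :=
    σ.injective (hσv ▸ Fin.ext hw)
  refine ⟨G.map σ.toEmbedding, ⟨SimpleGraph.Iso.map σ G⟩, ?_⟩
  rintro _ _ ⟨-, x, y, hxy, rfl, rfl⟩
  refine Hgraph_adj.mpr ⟨σ.injective.ne hxy.ne, ?_⟩
  have hpos : (σ x).val = 0 → (σ y).val ≠ 0 := fun hx hy =>
    hxy.ne ((hzero hx).trans (hzero hy).symm)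
  simp only [Equiv.coe_toEmbedding]
  by_cases hx : (σ x).val = 0
  · have := hlt (hzero hx ▸ hxy)
    omega
  · by_cases hy : (σ y).val = 0
    · have := hlt (hzero hy ▸ hxy.symm)
      omega
    · omega

end Hgraph

/-- For 1 ≤ a ≤ b, b ≥ 2, n ≥ 3a+4 (na even when a = b): any n-vertex graph that is
not [a,b]-covered satisfies ρ(G) ≤ ρ(H_{n,a}), with equality iff G ≅ H_{n,a}. -/
theorem spectral_extremal_non_abCovered {n a b : ℕ} (ha : 1 ≤ a) (hab : a ≤ b)
    (hb : 2 ≤ b) (hn : 3 * a + 4 ≤ n) (hpar : a = b → Even (n * a))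
    (G : SimpleGraph (Fin n)) (h : ¬ IsABCovered G a b) :
    specRad G ≤ specRad (Hgraph n a) ∧
      (specRad G = specRad (Hgraph n a) ↔ Nonempty (G ≃g Hgraph n a)) := by
  have : NeZero n := ⟨by omega⟩
  rw [specRad_eq_maxEigenvalue, specRad_eq_maxEigenvalue]
  by_cases hδ : ∀ v, a ≤ G.degree v
  · have hlt : maxEigenvalue (G.adjMatrix ℝ) < maxEigenvalue ((Hgraph n a).adjMatrix ℝ) := by
      refine lt_of_lt_of_le (lt_of_not_ge fun hρ => h ?_)
        (le_maxEigenvalue_adjMatrix_Hgraph (by omega) a)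
      exact isABCovered_of_card_sub_two_le_maxEigenvalue ha hab hb (by simpa using hn)
        (by simpa using hpar) hδ (by simpa using hρ)
    exact ⟨hlt.le, fun heq => absurd heq hlt.ne, fun ⟨e⟩ => maxEigenvalue_adjMatrix_congr e⟩
  · push Not at hδ
    obtain ⟨v, hv⟩ := hδ
    obtain ⟨K, ⟨e⟩, hK⟩ := exists_iso_le_Hgraph hv
    rw [maxEigenvalue_adjMatrix_congr e]
    refine ⟨maxEigenvalue_adjMatrix_mono hK, fun heq => ?_, fun ⟨e'⟩ => ?_⟩
    · exact ⟨eq_of_le_of_maxEigenvalue_adjMatrix_eq hK heq (fun _ _ => Hgraph_reachable) ▸ e⟩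
    · exact maxEigenvalue_adjMatrix_congr (e.symm.trans e')
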